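/- arXiv:math/0310044 — 6 statements merged into one kernel-verified Lean document; each statement's English description precedes it below -/
import Mathlib

section
/- Let 0 < s ≤ t. Then ∫_{-∞}^{∞} P(B_s > z) · P(B_t ≤ z) dz = √(s+t)/√(2π), i.e. ∫_{-∞}^{∞} (1 − Φ_s(z)) · Φ_t(z) dz = √(s+t)/√(2π), where Φ_v(z) denotes the cumulative distribution function of the centered Gaussian measure on ℝ with variance v. -/
open MeasureTheory ProbabilityTheory Real Set

/-- The cumulative distribution function `Φ_v(z)` of the centered Gaussian
measure on `ℝ` with variance `v`. -/
noncomputable def gaussianCdf (v : ℝ) (z : ℝ) : ℝ :=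
  (ProbabilityTheory.gaussianReal 0 v.toNNReal (Set.Iic z)).toReal

/-!
For independent `X ∼ μ` and `Y ∼ ν`, the set of `z` with `Y ≤ z < X` has length `(X - Y)⁺`, so by
Tonelli `∫ P(X > z) P(Y ≤ z) dz = E (X - Y)⁺`. If `X` and `Y` are centered Gaussian with variances
`s` and `t`, then `X - Y` is centered Gaussian with variance `s + t`, and the mean of its positive
part is computed from the antiderivative `-v φ_v(x)` of `x φ_v(x)`, where `φ_v` is the density.
-/

open scoped NNReal

section TailMulCdf

theorem lintegral_measure_Ioi_mul_measure_Iic {α : Type*} [LinearOrder α] [TopologicalSpace α]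
    [OrderClosedTopology α] [SecondCountableTopology α] [MeasurableSpace α]
    [OpensMeasurableSpace α] (ρ μ ν : Measure α) [SFinite ρ] [SFinite μ] [SFinite ν] :
    ∫⁻ z, μ (Ioi z) * ν (Iic z) ∂ρ = ∫⁻ p, ρ (Ico p.2 p.1) ∂μ.prod ν := by
  let S : Set (α × α × α) := {q | q.1 < q.2.1 ∧ q.2.2 ≤ q.1}
  have hS : MeasurableSet S :=
    (measurableSet_lt (by fun_prop) (by fun_prop)).inter
      (measurableSet_le (by fun_prop) (by fun_prop))
  have slice_fst (z : α) : Prod.mk z ⁻¹' S = Ioi z ×ˢ Iic z := rfl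
  have slice_snd (p : α × α) : (fun z ↦ (z, p)) ⁻¹' S = Ico p.2 p.1 := by
    ext z
    exact and_comm
  calc ∫⁻ z, μ (Ioi z) * ν (Iic z) ∂ρ
    _ = ρ.prod (μ.prod ν) S := by simp only [Measure.prod_apply hS, slice_fst, Measure.prod_prod]
    _ = ∫⁻ p, ρ (Ico p.2 p.1) ∂μ.prod ν := by simp only [Measure.prod_apply_symm hS, slice_snd]

variable (μ ν : Measure ℝ) [IsProbabilityMeasure μ] [IsProbabilityMeasure ν]

theorem ofReal_one_sub_cdf (z : ℝ) : ENNReal.ofReal (1 - cdf μ z) = μ (Ioi z) := by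
  rw [cdf_eq_real, ← probReal_compl_eq_one_sub measurableSet_Iic, compl_Iic, ofReal_measureReal]

-- If `E (X - Y)⁺ = ∞`, neither side is integrable and both Bochner integrals are `0`.
theorem integral_one_sub_cdf_mul_cdf :
    ∫ z, (1 - cdf μ z) * cdf ν z = ∫ p, max (p.1 - p.2) 0 ∂μ.prod ν := by
  have one_sub_cdf_nonneg (z : ℝ) : 0 ≤ 1 - cdf μ z := sub_nonneg.2 (cdf_le_one μ z)
  have measurable_integrand : Measurable fun z ↦ (1 - cdf μ z) * cdf ν z :=
    (measurable_const.sub (monotone_cdf μ).measurable).mul (monotone_cdf ν).measurable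
  rw [integral_eq_lintegral_of_nonneg_ae
      (ae_of_all _ fun z ↦ mul_nonneg (one_sub_cdf_nonneg z) (cdf_nonneg ν z))
      measurable_integrand.aestronglyMeasurable,
    integral_eq_lintegral_of_nonneg_ae (ae_of_all _ fun p : ℝ × ℝ ↦ le_max_right (p.1 - p.2) 0)
      (by fun_prop)]
  simp only [ENNReal.ofReal_mul (one_sub_cdf_nonneg _), ofReal_one_sub_cdf, ofReal_cdf,
    lintegral_measure_Ioi_mul_measure_Iic, Real.volume_Ico, ENNReal.ofReal_max,
    ENNReal.ofReal_zero, zero_le, sup_of_le_left]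

end TailMulCdf

section Gaussian

theorem map_sub_prod_gaussianReal (m₁ m₂ : ℝ) (v₁ v₂ : ℝ≥0) :
    ((gaussianReal m₁ v₁).prod (gaussianReal m₂ v₂)).map (fun p ↦ p.1 - p.2)
      = gaussianReal (m₁ - m₂) (v₁ + v₂) := by
  calc ((gaussianReal m₁ v₁).prod (gaussianReal m₂ v₂)).map (fun p ↦ p.1 - p.2)
    _ = (((gaussianReal m₁ v₁).prod (gaussianReal m₂ v₂)).map (Prod.map id Neg.neg)).map
          (fun p ↦ p.1 + p.2) := by
      rw [Measure.map_map (by fun_prop) (by fun_prop)]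
      simp only [Function.comp_def, Prod.map_fst, Prod.map_snd, id_eq, sub_eq_add_neg]
    _ = (gaussianReal m₁ v₁).conv (gaussianReal (-m₂) v₂) := by
      rw [← Measure.map_prod_map _ _ measurable_id measurable_neg, Measure.map_id,
        ← gaussianReal_map_neg]
      rfl
    _ = gaussianReal (m₁ - m₂) (v₁ + v₂) := by
      rw [gaussianReal_conv_gaussianReal, sub_eq_add_neg]

theorem hasDerivAt_gaussianPDFReal (m : ℝ) (v : ℝ≥0) (x : ℝ) :
    HasDerivAt (gaussianPDFReal m v) (-((x - m) / v) * gaussianPDFReal m v x) x := by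
  have hasDerivAt_exponent :
      HasDerivAt (fun y ↦ -(y - m) ^ 2 / (2 * v)) (-((x - m) / v)) x := by
    convert! ((((hasDerivAt_id x).sub_const m).pow 2).neg.div_const (2 * (v : ℝ))) using 1
    simp only [id_eq]
    field_simp
    ring
  convert! hasDerivAt_exponent.exp.const_mul (√(2 * π * v))⁻¹ using 1
  rw [gaussianPDFReal]
  ring

theorem integrable_gaussianPDFReal_mul_sub (m : ℝ) (v : ℝ≥0) :
    Integrable fun x ↦ gaussianPDFReal m v x * (x - m) := by
  rcases eq_or_ne v 0 with rfl | hv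
  · simp
  have integrable_sub : Integrable (fun x ↦ x - m) (gaussianReal m v) :=
    ((memLp_id_gaussianReal 1).integrable le_rfl).sub (integrable_const m)
  rw [gaussianReal_of_var_ne_zero m hv, integrable_withDensity_iff_integrable_smul'
    (measurable_gaussianPDF m v) (ae_of_all _ fun _ ↦ gaussianPDF_lt_top)] at integrable_sub
  simpa only [toReal_gaussianPDF, smul_eq_mul] using integrable_sub

theorem integral_Ioi_gaussianPDFReal_mul_sub (m : ℝ) (v : ℝ≥0) (a : ℝ) :
    ∫ x in Ioi a, gaussianPDFReal m v x * (x - m) = v * gaussianPDFReal m v a := by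
  rcases eq_or_ne v 0 with rfl | hv
  · simp
  have hasDerivAt_antideriv (x : ℝ) : HasDerivAt (fun y ↦ -v * gaussianPDFReal m v y)
      (gaussianPDFReal m v x * (x - m)) x := by
    convert! (hasDerivAt_gaussianPDFReal m v x).const_mul (-v : ℝ) using 1
    field_simp
  have integrableOn_deriv := (integrable_gaussianPDFReal_mul_sub m v).integrableOn (s := Ioi a)
  have tendsto_antideriv := tendsto_zero_of_hasDerivAt_of_integrableOn_Ioi
    (fun x _ ↦ hasDerivAt_antideriv x) integrableOn_deriv
    ((integrable_gaussianPDFReal m v).const_mul _).integrableOn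
  rw [integral_Ioi_of_hasDerivAt_of_tendsto' (fun x _ ↦ hasDerivAt_antideriv x)
    integrableOn_deriv tendsto_antideriv]
  ring

theorem integral_max_sub_zero_gaussianReal (m : ℝ) (v : ℝ≥0) :
    ∫ x, max (x - m) 0 ∂gaussianReal m v = √v / √(2 * π) := by
  rcases eq_or_ne v 0 with rfl | hv
  · simp
  calc ∫ x, max (x - m) 0 ∂gaussianReal m v
    _ = ∫ x, gaussianPDFReal m v x * max (x - m) 0 := integral_gaussianReal_eq_integral_smul hv
    _ = ∫ x in Ioi m, gaussianPDFReal m v x * max (x - m) 0 := by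
      refine (setIntegral_eq_integral_of_forall_compl_eq_zero fun x hx ↦ ?_).symm
      rw [max_eq_right (sub_nonpos.2 (notMem_Ioi.1 hx)), mul_zero]
    _ = ∫ x in Ioi m, gaussianPDFReal m v x * (x - m) :=
      setIntegral_congr_fun measurableSet_Ioi fun x hx ↦ by
        simp only [max_eq_left (sub_nonneg.2 (mem_Ioi.1 hx).le)]
    _ = v * gaussianPDFReal m v m := integral_Ioi_gaussianPDFReal_mul_sub m v m
    _ = v / √v / √(2 * π) := by
      have gaussianPDFReal_self : gaussianPDFReal m v m = (√(2 * π * v))⁻¹ := by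
        simp [gaussianPDFReal]
      rw [gaussianPDFReal_self, sqrt_mul (by positivity)]
      ring
    _ = √v / √(2 * π) := by rw [div_sqrt]

theorem gaussianCdf_eq_cdf (v z : ℝ) :
    gaussianCdf v z = cdf (gaussianReal 0 v.toNNReal) z :=
  (cdf_eq_real _ z).symm

end Gaussian

theorem integral_gaussian_tail_mul_cdf_general (s t : ℝ) (hs : 0 ≤ s) (ht : 0 ≤ t) :
    ∫ z : ℝ, (1 - gaussianCdf s z) * gaussianCdf t z = √(s + t) / √(2 * π) := by
  calc ∫ z : ℝ, (1 - gaussianCdf s z) * gaussianCdf t z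
    _ = ∫ p, max (p.1 - p.2) 0
          ∂(gaussianReal 0 s.toNNReal).prod (gaussianReal 0 t.toNNReal) := by
      simp only [gaussianCdf_eq_cdf, integral_one_sub_cdf_mul_cdf]
    _ = ∫ x, max x 0 ∂gaussianReal 0 (s + t).toNNReal := by
      have map_sub := map_sub_prod_gaussianReal 0 0 s.toNNReal t.toNNReal
      rw [sub_zero, ← toNNReal_add hs ht] at map_sub
      rw [← map_sub, integral_map (by fun_prop) (by fun_prop)]
    _ = √(s + t) / √(2 * π) := by
      simpa only [sub_zero, coe_toNNReal _ (add_nonneg hs ht)] using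
        integral_max_sub_zero_gaussianReal 0 (s + t).toNNReal

/-- Formula (4.7): for `0 < s ≤ t`,
`∫_{-∞}^{∞} P(B_s > z) P(B_t ≤ z) dz = √(s+t)/√(2π)`. -/
theorem integral_gaussian_tail_mul_cdf (s t : ℝ) (hs : 0 < s) (hst : s ≤ t) :
    ∫ z : ℝ, (1 - gaussianCdf s z) * gaussianCdf t z
      = Real.sqrt (s + t) / Real.sqrt (2 * Real.pi) :=
  integral_gaussian_tail_mul_cdf_general s t hs.le (hs.le.trans hst)
end

section
/- Let 0 < s < t. Let X and Y be independent real random variables where X has the centered Gaussian distribution with variance s and Y has the centered Gaussian distribution with variance t − s. Then ∫_{-∞}^{∞} P(X > z and X + Y ≤ z) dz = √(t−s)/√(2π). (In terms of standard Brownian motion B, since B_t = B_s + (B_t − B_s) with independent Gaussian increments, this says ∫_{-∞}^{∞} P(B_s > z ≥ B_t) dz = √(t−s)/√(2π).) -/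
open MeasureTheory ProbabilityTheory Real Set

/-!
By Fubini, integrating `P(X + Y ≤ z < X)` over `z` gives the expected length of the random interval
`[X + Y, X)`. This length is the positive part of `-Y`, and `-Y` is again centered Gaussian.
-/

section Fubini

lemma integral_measureReal_prodMk_preimage_comm {α β : Type*}
    [MeasurableSpace α] [MeasurableSpace β] {μ : Measure α} {ν : Measure β} [SFinite μ] [SFinite ν]
    {s : Set (α × β)} (hs : MeasurableSet s) (hν : ∀ᵐ x ∂μ, ν (Prod.mk x ⁻¹' s) < ⊤)
    (hμ : ∀ᵐ y ∂ν, μ ((·, y) ⁻¹' s) < ⊤) :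
    ∫ x, ν.real (Prod.mk x ⁻¹' s) ∂μ = ∫ y, μ.real ((·, y) ⁻¹' s) ∂ν := by
  simp only [measureReal_def]
  rw [integral_toReal (measurable_measure_prodMk_left hs).aemeasurable hν,
    integral_toReal (measurable_measure_prodMk_right hs).aemeasurable hμ]
  exact congrArg _ ((Measure.prod_apply hs).symm.trans (Measure.prod_apply_symm hs))

variable {Ω : Type*} [MeasurableSpace Ω] {μ : Measure Ω} [IsFiniteMeasure μ]
  {ν : Measure ℝ} [IsLocallyFiniteMeasure ν] {f g : Ω → ℝ}

lemma integral_measureReal_mem_Ico_of_measurable (hf : Measurable f) (hg : Measurable g) :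
    ∫ z, μ.real {ω | z ∈ Ico (f ω) (g ω)} ∂ν = ∫ ω, ν.real (Ico (f ω) (g ω)) ∂μ := by
  have region_measurable : MeasurableSet {p : ℝ × Ω | p.1 ∈ Ico (f p.2) (g p.2)} :=
    (measurableSet_le (hf.comp measurable_snd) measurable_fst).inter
      (measurableSet_lt measurable_fst (hg.comp measurable_snd))
  exact integral_measureReal_prodMk_preimage_comm region_measurable
    (ae_of_all _ fun _ ↦ measure_lt_top _ _)
    (ae_of_all _ fun ω ↦ measure_Ico_lt_top (a := f ω) (b := g ω))

lemma integral_measureReal_mem_Ico (hf : AEMeasurable f μ) (hg : AEMeasurable g μ) :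
    ∫ z, μ.real {ω | z ∈ Ico (f ω) (g ω)} ∂ν = ∫ ω, ν.real (Ico (f ω) (g ω)) ∂μ := by
  have Ico_ae_eq : ∀ᵐ ω ∂μ, Ico (f ω) (g ω) = Ico (hf.mk f ω) (hg.mk g ω) := by
    filter_upwards [hf.ae_eq_mk, hg.ae_eq_mk] with ω hfω hgω
    rw [hfω, hgω]
  calc ∫ z, μ.real {ω | z ∈ Ico (f ω) (g ω)} ∂ν
      = ∫ z, μ.real {ω | z ∈ Ico (hf.mk f ω) (hg.mk g ω)} ∂ν :=
        integral_congr_ae <| ae_of_all _ fun z ↦ measureReal_congr <|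
          Ico_ae_eq.mono fun _ h ↦ congrArg (z ∈ ·) h
    _ = ∫ ω, ν.real (Ico (hf.mk f ω) (hg.mk g ω)) ∂μ :=
        integral_measureReal_mem_Ico_of_measurable hf.measurable_mk hg.measurable_mk
    _ = ∫ ω, ν.real (Ico (f ω) (g ω)) ∂μ :=
        integral_congr_ae <| Ico_ae_eq.mono fun _ h ↦ congrArg ν.real h.symm

end Fubini

section Gaussian

lemma integral_Ioi_mul_exp_neg_mul_sq {b : ℝ} (hb : 0 < b) :
    ∫ x in Ioi (0 : ℝ), x * exp (-b * x ^ 2) = (2 * b)⁻¹ := by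
  have h := integral_mul_cexp_neg_mul_sq (b := (b : ℂ)) (by simpa using hb)
  exact_mod_cast h

lemma integral_max_zero_gaussianReal (v : NNReal) :
    ∫ y, max y 0 ∂(gaussianReal 0 v) = √v / √(2 * π) := by
  rcases eq_or_ne v 0 with rfl | hv
  · simp
  have integrand_eq : (fun y ↦ gaussianPDFReal 0 v y • max y 0) =
      (Ioi 0).indicator fun y ↦ (√(2 * π * v))⁻¹ * (y * exp (-(2 * v : ℝ)⁻¹ * y ^ 2)) := by
    ext y
    rcases lt_or_ge 0 y with hy | hy
    · rw [indicator_of_mem (mem_Ioi.mpr hy), max_eq_left hy.le, gaussianPDFReal, smul_eq_mul,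
        sub_zero, show -y ^ 2 / (2 * (v : ℝ)) = -(2 * v : ℝ)⁻¹ * y ^ 2 by ring]
      ring
    · rw [indicator_of_notMem (notMem_Ioi.mpr hy), max_eq_right hy, smul_zero]
  calc ∫ y, max y 0 ∂(gaussianReal 0 v)
      = (√(2 * π * v))⁻¹ * ∫ y in Ioi (0 : ℝ), y * exp (-(2 * v : ℝ)⁻¹ * y ^ 2) := by
        rw [integral_gaussianReal_eq_integral_smul hv, integrand_eq,
          integral_indicator measurableSet_Ioi, integral_const_mul]
    _ = (√(2 * π * v))⁻¹ * v := by
        rw [integral_Ioi_mul_exp_neg_mul_sq (by positivity)]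
        field_simp
    _ = √v / √(2 * π) := by
        rw [sqrt_mul (by positivity), mul_inv, mul_assoc, inv_mul_eq_div (√v), div_sqrt,
          inv_mul_eq_div]

end Gaussian

theorem integral_crossing_prob_general {Ω : Type*} [MeasurableSpace Ω] {μ : Measure Ω}
    {X Y : Ω → ℝ} {v : NNReal} (hX : AEMeasurable X μ) (hY : HasLaw Y (gaussianReal 0 v) μ) :
    ∫ z, μ.real {ω | X ω > z ∧ X ω + Y ω ≤ z} = √v / √(2 * π) := by
  have := hY.isProbabilityMeasure
  have neg_law : HasLaw (-Y) (gaussianReal 0 v) μ := by simpa using gaussianReal_neg hY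
  calc ∫ z, μ.real {ω | X ω > z ∧ X ω + Y ω ≤ z}
      = ∫ z, μ.real {ω | z ∈ Ico (X ω + Y ω) (X ω)} := by
        simp only [mem_Ico, gt_iff_lt, and_comm]
    _ = ∫ ω, volume.real (Ico (X ω + Y ω) (X ω)) ∂μ :=
        integral_measureReal_mem_Ico (hX.add hY.aemeasurable) hX
    _ = ∫ ω, max ((-Y) ω) 0 ∂μ := by
        simp only [volume_real_Ico, sub_add_cancel_left, Pi.neg_apply]
    _ = ∫ y, max y 0 ∂(gaussianReal 0 v) :=
        neg_law.integral_comp (f := fun y ↦ max y 0) (by fun_prop)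
    _ = √v / √(2 * π) := integral_max_zero_gaussianReal v

/-- Formula (4.9): if `X ~ N(0, s)` and `Y ~ N(0, t - s)` are independent, then
`∫_{-∞}^{∞} P(X > z and X + Y ≤ z) dz = √(t−s)/√(2π)`,
i.e. `∫_{-∞}^{∞} P(B_s > z ≥ B_t) dz = √(t−s)/√(2π)` for Brownian motion. -/
theorem integral_crossing_prob
    {Ω : Type*} [MeasureSpace Ω] [IsProbabilityMeasure (ℙ : Measure Ω)]
    (s t : ℝ) (hs : 0 < s) (hst : s < t)
    (X Y : Ω → ℝ) (hX : Measurable X) (hY : Measurable Y)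
    (hindep : IndepFun X Y ℙ)
    (hXlaw : Measure.map X ℙ = ProbabilityTheory.gaussianReal 0 s.toNNReal)
    (hYlaw : Measure.map Y ℙ = ProbabilityTheory.gaussianReal 0 (t - s).toNNReal) :
    ∫ z : ℝ, (ℙ {ω | X ω > z ∧ X ω + Y ω ≤ z}).toReal
      = Real.sqrt (t - s) / Real.sqrt (2 * Real.pi) := by
  simpa only [measureReal_def, coe_toNNReal _ (sub_pos.mpr hst).le] using
    integral_crossing_prob_general hX.aemeasurable ⟨hY.aemeasurable, hYlaw⟩
end

section
/- The kernel K(s,t) = √(s+t) − √|s−t| on [0,∞) × [0,∞) is positive semidefinite: for every integer N ≥ 1, all t_1, ..., t_N ∈ [0,∞) and all θ_1, ..., θ_N ∈ ℝ, one has Σ_{i=1}^{N} Σ_{j=1}^{N} θ_i θ_j (√(t_i + t_j) − √|t_i − t_j|) ≥ 0. -/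
/-!
Rescaling `u` in `C = ∫₀^∞ (1 - cos u) u^(-1-α) du`, which is finite and positive for `0 < α < 2`,
gives `C |x|^α = ∫₀^∞ (1 - cos (x u)) u^(-1-α) du`. Since
`cos ((s - t) u) - cos ((s + t) u) = 2 sin (s u) sin (t u)`, it follows that
`C (|s + t|^α - |s - t|^α) = 2 ∫₀^∞ sin (s u) sin (t u) u^(-1-α) du`, so the kernel
`|s + t|^α - |s - t|^α` is, up to a positive factor, a Gram kernel. The theorem is the case
`α = 1/2`.
-/

open MeasureTheory Set

section GramKernel

variable {ι X : Type*} [Fintype ι] [MeasurableSpace X] {μ : Measure X}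

lemma sum_sum_mul_mul_eq_sq (θ a : ι → ℝ) :
    ∑ i, ∑ j, θ i * θ j * (a i * a j) = (∑ i, θ i * a i) ^ 2 := by
  simp only [sq, Finset.sum_mul_sum, mul_mul_mul_comm]

lemma sum_sum_mul_integral_mul_mul_nonneg {f : ι → X → ℝ} {w : X → ℝ} (hw : 0 ≤ᵐ[μ] w)
    (hf : ∀ i j, Integrable (fun x ↦ f i x * f j x * w x) μ) (θ : ι → ℝ) :
    0 ≤ ∑ i, ∑ j, θ i * θ j * ∫ x, f i x * f j x * w x ∂μ := by
  have hθf (i j : ι) : Integrable (fun x ↦ θ i * θ j * (f i x * f j x * w x)) μ :=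
    (hf i j).const_mul _
  calc
    0 ≤ ∫ x, (∑ i, θ i * f i x) ^ 2 * w x ∂μ :=
      integral_nonneg_of_ae (hw.mono fun x hx ↦ mul_nonneg (sq_nonneg _) hx)
    _ = ∫ x, ∑ i, ∑ j, θ i * θ j * (f i x * f j x * w x) ∂μ := by
      simp only [← sum_sum_mul_mul_eq_sq, Finset.sum_mul, mul_assoc]
    _ = ∑ i, ∑ j, θ i * θ j * ∫ x, f i x * f j x * w x ∂μ := by
      rw [integral_finsetSum _ fun i _ ↦ integrable_finsetSum _ fun j _ ↦ hθf i j]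
      simp only [integral_finsetSum _ fun j _ ↦ hθf _ j, integral_const_mul]

end GramKernel

section OneSubCos

variable {α a : ℝ}

lemma one_sub_cos_mul_rpow_nonneg (α x : ℝ) {u : ℝ} (hu : 0 ≤ u) :
    0 ≤ (1 - Real.cos (x * u)) * u ^ (-1 - α) :=
  mul_nonneg (sub_nonneg.2 (Real.cos_le_one _)) (Real.rpow_nonneg hu _)

lemma integrableOn_Ioc_one_sub_cos_mul_rpow (hα : α < 2) (ha : 0 ≤ a) (x : ℝ) :
    IntegrableOn (fun u : ℝ ↦ (1 - Real.cos (x * u)) * u ^ (-1 - α)) (Ioc 0 a) := by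
  have h_dominating : IntegrableOn (fun u : ℝ ↦ x ^ 2 / 2 * u ^ (1 - α)) (Ioc 0 a) := by
    rw [← intervalIntegrable_iff_integrableOn_Ioc_of_le ha]
    exact (intervalIntegral.intervalIntegrable_rpow' (by linarith)).const_mul _
  refine h_dominating.mono' (by fun_prop) ?_
  refine (ae_restrict_mem measurableSet_Ioc).mono fun u hu ↦ ?_
  have hu_rpow : u ^ (1 - α) = u ^ 2 * u ^ (-1 - α) := by
    rw [← Real.rpow_natCast, ← Real.rpow_add hu.1]
    ring_nf
  have h_one_sub_cos : 1 - Real.cos (x * u) ≤ x ^ 2 / 2 * u ^ 2 := by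
    linarith [Real.one_sub_sq_div_two_le_cos (x := x * u), mul_pow x u 2]
  rw [Real.norm_of_nonneg (one_sub_cos_mul_rpow_nonneg α x hu.1.le), hu_rpow, ← mul_assoc]
  exact mul_le_mul_of_nonneg_right h_one_sub_cos (Real.rpow_nonneg hu.1.le _)

lemma integrableOn_Ioi_one_sub_cos_mul_rpow_of_pos (hα : 0 < α) (ha : 0 < a) (x : ℝ) :
    IntegrableOn (fun u : ℝ ↦ (1 - Real.cos (x * u)) * u ^ (-1 - α)) (Ioi a) := by
  have h_dominating : IntegrableOn (fun u : ℝ ↦ 2 * u ^ (-1 - α)) (Ioi a) :=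
    (integrableOn_Ioi_rpow_of_lt (by linarith) ha).const_mul 2
  refine h_dominating.mono' (by fun_prop) ?_
  refine (ae_restrict_mem measurableSet_Ioi).mono fun u hu ↦ ?_
  have hu_nonneg : 0 ≤ u := (ha.trans hu).le
  rw [Real.norm_of_nonneg (one_sub_cos_mul_rpow_nonneg α x hu_nonneg)]
  exact mul_le_mul_of_nonneg_right (by linarith [Real.neg_one_le_cos (x * u)])
    (Real.rpow_nonneg hu_nonneg _)

lemma integrableOn_Ioi_one_sub_cos_mul_rpow (hα₀ : 0 < α) (hα₂ : α < 2) (x : ℝ) :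
    IntegrableOn (fun u : ℝ ↦ (1 - Real.cos (x * u)) * u ^ (-1 - α)) (Ioi 0) := by
  rw [← Ioc_union_Ioi_eq_Ioi zero_le_one]
  exact (integrableOn_Ioc_one_sub_cos_mul_rpow hα₂ zero_le_one x).union
    (integrableOn_Ioi_one_sub_cos_mul_rpow_of_pos hα₀ one_pos x)

/-- The constant `C` in `∫₀^∞ (1 - cos (x u)) u^(-1-α) du = C |x|^α`. The integral converges exactly
for `0 < α < 2`; for other `α` the value is the junk value `0`. -/
noncomputable def oneSubCosIntegral (α : ℝ) : ℝ :=
  ∫ u in Ioi (0 : ℝ), (1 - Real.cos u) * u ^ (-1 - α)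

lemma oneSubCosIntegral_pos (hα₀ : 0 < α) (hα₂ : α < 2) : 0 < oneSubCosIntegral α := by
  have h_integrable := integrableOn_Ioi_one_sub_cos_mul_rpow hα₀ hα₂ 1
  have h_nonneg : ∀ u ∈ Ioi (0 : ℝ), 0 ≤ (1 - Real.cos (1 * u)) * u ^ (-1 - α) :=
    fun u hu ↦ one_sub_cos_mul_rpow_nonneg α 1 (mem_Ioi.1 hu).le
  simp only [one_mul] at h_integrable h_nonneg
  rw [oneSubCosIntegral, setIntegral_pos_iff_support_of_nonneg_ae
    ((ae_restrict_mem measurableSet_Ioi).mono h_nonneg) h_integrable]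
  have h_support : Ioo 0 1 ⊆
      Function.support (fun u : ℝ ↦ (1 - Real.cos u) * u ^ (-1 - α)) ∩ Ioi 0 := by
    intro u hu
    have h_cos : Real.cos u < 1 := by
      simpa using Real.cos_lt_cos_of_nonneg_of_le_pi le_rfl
        (by linarith [hu.2, Real.pi_gt_three]) hu.1
    exact ⟨(mul_pos (sub_pos.2 h_cos) (Real.rpow_pos_of_pos hu.1 _)).ne', hu.1⟩
  exact (by simp : 0 < volume (Ioo (0 : ℝ) 1)).trans_le (measure_mono h_support)

lemma integral_one_sub_cos_mul_rpow_of_pos (α : ℝ) {x : ℝ} (hx : 0 < x) :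
    ∫ u in Ioi (0 : ℝ), (1 - Real.cos (x * u)) * u ^ (-1 - α) = x ^ α * oneSubCosIntegral α := by
  have h_rescale := integral_comp_mul_left_Ioi
    (fun u : ℝ ↦ (1 - Real.cos u) * u ^ (-1 - α)) 0 hx
  rw [mul_zero, smul_eq_mul, ← oneSubCosIntegral] at h_rescale
  have hx_rpow : x ^ α = x ^ (1 + α) * x⁻¹ := by
    rw [← Real.rpow_neg_one, ← Real.rpow_add hx]
    ring_nf
  have hx_cancel : x ^ (1 + α) * x ^ (-1 - α) = 1 := by
    rw [← Real.rpow_add hx]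
    ring_nf
    exact Real.rpow_zero x
  rw [hx_rpow, mul_assoc, ← h_rescale, ← integral_const_mul]
  refine setIntegral_congr_fun measurableSet_Ioi fun u hu ↦ ?_
  simp only [Real.mul_rpow hx.le (mem_Ioi.1 hu).le]
  linear_combination (-(1 - Real.cos (x * u)) * u ^ (-1 - α)) * hx_cancel

lemma integral_one_sub_cos_mul_rpow (hα : α ≠ 0) (x : ℝ) :
    ∫ u in Ioi (0 : ℝ), (1 - Real.cos (x * u)) * u ^ (-1 - α) =
      |x| ^ α * oneSubCosIntegral α := by
  rcases eq_or_ne x 0 with rfl | hx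
  · simp [Real.zero_rpow hα]
  · have h_cos (u : ℝ) : Real.cos (|x| * u) = Real.cos (x * u) := by
      rw [← Real.cos_abs, abs_mul, abs_abs, ← abs_mul, Real.cos_abs]
    simpa only [h_cos] using integral_one_sub_cos_mul_rpow_of_pos α (abs_pos.2 hx)

end OneSubCos

section SinMulSin

variable {α : ℝ}

lemma sin_mul_sin_mul_eq_half_sub (s t u c : ℝ) :
    Real.sin (s * u) * Real.sin (t * u) * c =
      ((1 - Real.cos ((s + t) * u)) * c - (1 - Real.cos ((s - t) * u)) * c) / 2 := by
  rw [add_mul, sub_mul s, Real.cos_add, Real.cos_sub]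
  ring

lemma integrableOn_sin_mul_sin_mul_rpow (hα₀ : 0 < α) (hα₂ : α < 2) (s t : ℝ) :
    IntegrableOn (fun u : ℝ ↦ Real.sin (s * u) * Real.sin (t * u) * u ^ (-1 - α)) (Ioi 0) := by
  simp only [sin_mul_sin_mul_eq_half_sub]
  exact ((integrableOn_Ioi_one_sub_cos_mul_rpow hα₀ hα₂ _).sub
    (integrableOn_Ioi_one_sub_cos_mul_rpow hα₀ hα₂ _)).div_const 2

lemma integral_sin_mul_sin_mul_rpow (hα₀ : 0 < α) (hα₂ : α < 2) (s t : ℝ) :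
    ∫ u in Ioi (0 : ℝ), Real.sin (s * u) * Real.sin (t * u) * u ^ (-1 - α) =
      (|s + t| ^ α - |s - t| ^ α) * (oneSubCosIntegral α / 2) := by
  simp only [sin_mul_sin_mul_eq_half_sub]
  rw [integral_div, integral_sub (integrableOn_Ioi_one_sub_cos_mul_rpow hα₀ hα₂ _)
      (integrableOn_Ioi_one_sub_cos_mul_rpow hα₀ hα₂ _),
    integral_one_sub_cos_mul_rpow hα₀.ne', integral_one_sub_cos_mul_rpow hα₀.ne']
  ring

end SinMulSin

theorem posSemidef_sqrt_diff_kernel_general {ι : Type*} [Fintype ι] {α : ℝ} (hα₀ : 0 < α)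
    (hα₂ : α ≤ 2) (t θ : ι → ℝ) :
    0 ≤ ∑ i, ∑ j, θ i * θ j * (|t i + t j| ^ α - |t i - t j| ^ α) := by
  rcases hα₂.lt_or_eq with hα₂ | rfl
  · have h_weight : 0 ≤ᵐ[volume.restrict (Ioi 0)] fun u : ℝ ↦ u ^ (-1 - α) :=
      (ae_restrict_mem measurableSet_Ioi).mono fun u hu ↦ Real.rpow_nonneg (mem_Ioi.1 hu).le _
    have h_gram := sum_sum_mul_integral_mul_mul_nonneg (f := fun i u ↦ Real.sin (t i * u)) h_weight
      (fun i j ↦ integrableOn_sin_mul_sin_mul_rpow hα₀ hα₂ (t i) (t j)) θ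
    simp only [integral_sin_mul_sin_mul_rpow hα₀ hα₂, ← mul_assoc, ← Finset.sum_mul] at h_gram
    exact nonneg_of_mul_nonneg_left h_gram (half_pos (oneSubCosIntegral_pos hα₀ hα₂))
  · have h_polarization (x y : ℝ) : |x + y| ^ (2 : ℝ) - |x - y| ^ (2 : ℝ) = 2 * x * (2 * y) := by
      rw [Real.rpow_two, Real.rpow_two, sq_abs, sq_abs]
      ring
    simp only [h_polarization, sum_sum_mul_mul_eq_sq θ fun i ↦ 2 * t i]
    exact sq_nonneg _

/-- The kernel `K(s,t) = √(s+t) − √|s−t|` on `[0,∞) × [0,∞)` is positive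
semidefinite. -/
theorem posSemidef_sqrt_diff_kernel (N : ℕ) (hN : 1 ≤ N)
    (t : Fin N → ℝ) (ht : ∀ i, 0 ≤ t i) (θ : Fin N → ℝ) :
    0 ≤ ∑ i : Fin N, ∑ j : Fin N,
        θ i * θ j * (Real.sqrt (t i + t j) - Real.sqrt |t i - t j|) := by
  simpa only [Real.sqrt_eq_rpow, abs_of_nonneg (add_nonneg (ht _) (ht _))] using
    posSemidef_sqrt_diff_kernel_general one_half_pos (by norm_num) t θ
end

section
/- Let a, b ≥ 0 and define g : [0,∞) × [0,∞) → ℝ by g(s,t) = a(√(s+t) − √|t−s|) + b(√s + √t − √(s+t)). Then for all 0 ≤ s ≤ t, g(t,t) + g(s,s) − 2g(s,t) ≤ (2a + b)·√(t−s). -/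
/-!
Write `D = 2√(s+t) − √(2s) − √(2t)` for the midpoint concavity defect of the square root at
`2s, 2t`. The increment of the kernel is exactly `2a√|t−s| + (b−a)D`, and `0 ≤ D ≤ √|t−s|`:
the lower bound is concavity, the upper bound is monotonicity together with subadditivity.
-/

open Set

/-- Twice the amount by which `f` at the midpoint of `x` and `y` exceeds the average of `f x` and
`f y`; it measures the failure of `f` to be affine and is nonnegative when `f` is concave. -/
noncomputable def midpointDefect (f : ℝ → ℝ) (x y : ℝ) : ℝ :=
  2 * f ((x + y) / 2) - f x - f y

theorem midpointDefect_comm (f : ℝ → ℝ) (x y : ℝ) :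
    midpointDefect f x y = midpointDefect f y x := by
  rw [midpointDefect, midpointDefect, add_comm x y, sub_right_comm]

theorem midpointDefect_nonneg {f : ℝ → ℝ} {S : Set ℝ} (hf : ConcaveOn ℝ S f) {x y : ℝ}
    (hx : x ∈ S) (hy : y ∈ S) : 0 ≤ midpointDefect f x y := by
  have average_le : (1 / 2) * f x + (1 / 2) * f y ≤ f ((1 / 2) * x + (1 / 2) * y) :=
    hf.2 hx hy (by norm_num) (by norm_num) (by norm_num)
  rw [show (1 / 2) * x + (1 / 2) * y = (x + y) / 2 by ring] at average_le
  rw [midpointDefect]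
  linarith

theorem midpointDefect_le {f : ℝ → ℝ} (hmono : MonotoneOn f (Ici 0))
    (hsub : ∀ u v, 0 ≤ u → 0 ≤ v → f (u + v) ≤ f u + f v) {x y : ℝ} (hx : 0 ≤ x) (hy : 0 ≤ y) :
    midpointDefect f x y ≤ f (|y - x| / 2) := by
  wlog hxy : x ≤ y generalizing x y
  · rw [midpointDefect_comm, abs_sub_comm]
    exact this hy hx (le_of_not_ge hxy)
  have le_right : f ((x + y) / 2) ≤ f y :=
    hmono (mem_Ici.2 (by linarith)) hy (by linarith)
  have le_left_add : f ((x + y) / 2) ≤ f x + f ((y - x) / 2) := by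
    rw [show (x + y) / 2 = x + (y - x) / 2 by ring]
    exact hsub x ((y - x) / 2) hx (by linarith)
  rw [midpointDefect, abs_of_nonneg (sub_nonneg.2 hxy)]
  linarith

theorem midpointDefect_sqrt_nonneg {x y : ℝ} (hx : 0 ≤ x) (hy : 0 ≤ y) :
    0 ≤ midpointDefect Real.sqrt x y :=
  midpointDefect_nonneg Real.strictConcaveOn_sqrt.concaveOn hx hy

theorem midpointDefect_sqrt_le {x y : ℝ} (hx : 0 ≤ x) (hy : 0 ≤ y) :
    midpointDefect Real.sqrt x y ≤ √(|y - x| / 2) := by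
  refine midpointDefect_le (Real.sqrt_monotone.monotoneOn _) (fun u v hu hv ↦ ?_) hx hy
  simpa only [Real.sqrt_eq_rpow] using
    Real.rpow_add_le_add_rpow hu hv one_half_pos.le one_half_lt_one.le

theorem covariance_increment_eq {a b : ℝ} {g : ℝ → ℝ → ℝ}
    (hg : ∀ s t, 0 ≤ s → 0 ≤ t →
      g s t = a * (√(s + t) - √|t - s|) + b * (√s + √t - √(s + t)))
    {s t : ℝ} (hs : 0 ≤ s) (ht : 0 ≤ t) :
    g t t + g s s - 2 * g s t
      = 2 * a * √|t - s| + (b - a) * midpointDefect Real.sqrt (2 * s) (2 * t) := by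
  rw [hg t t ht ht, hg s s hs hs, hg s t hs ht, midpointDefect,
    show (2 * s + 2 * t) / 2 = s + t by ring, two_mul s, two_mul t]
  simp only [sub_self, abs_zero, Real.sqrt_zero]
  ring

theorem covariance_increment_bound_general {a b : ℝ} {g : ℝ → ℝ → ℝ}
    (hg : ∀ s t, 0 ≤ s → 0 ≤ t →
      g s t = a * (√(s + t) - √|t - s|) + b * (√s + √t - √(s + t)))
    {s t : ℝ} (hs : 0 ≤ s) (ht : 0 ≤ t) :
    g t t + g s s - 2 * g s t ≤ (a + max a b) * √|t - s| := by
  have hs₂ : 0 ≤ 2 * s := by positivity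
  have ht₂ : 0 ≤ 2 * t := by positivity
  have defect_le : midpointDefect Real.sqrt (2 * s) (2 * t) ≤ √|t - s| := by
    have h := midpointDefect_sqrt_le hs₂ ht₂
    rwa [← mul_sub, abs_mul, abs_two, mul_div_cancel_left₀ _ two_ne_zero] at h
  calc g t t + g s s - 2 * g s t
      = 2 * a * √|t - s| + (b - a) * midpointDefect Real.sqrt (2 * s) (2 * t) :=
        covariance_increment_eq hg hs ht
    _ ≤ 2 * a * √|t - s| + (max a b - a) * √|t - s| := by
        gcongr
        · exact midpointDefect_sqrt_nonneg hs₂ ht₂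
        · exact sub_nonneg.2 (le_max_left a b)
        · exact le_max_right a b
    _ = (a + max a b) * √|t - s| := by ring

/-- The increment bound for the covariance (2.21): with
`g(s,t) = a(√(s+t) − √|t−s|) + b(√s + √t − √(s+t))` for `a, b ≥ 0`, one has
`g(t,t) + g(s,s) − 2g(s,t) ≤ (2a + b)·√(t−s)` for all `0 ≤ s ≤ t`. -/
theorem covariance_increment_bound (a b : ℝ) (ha : 0 ≤ a) (hb : 0 ≤ b)
    (g : ℝ → ℝ → ℝ)
    (hg : ∀ s t, 0 ≤ s → 0 ≤ t →
      g s t = a * (Real.sqrt (s + t) - Real.sqrt |t - s|)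
        + b * (Real.sqrt s + Real.sqrt t - Real.sqrt (s + t)))
    (s t : ℝ) (hs : 0 ≤ s) (hst : s ≤ t) :
    g t t + g s s - 2 * g s t ≤ (2 * a + b) * Real.sqrt (t - s) := by
  have constant_le : a + max a b ≤ 2 * a + b := by linarith [max_le_add_of_nonneg ha hb]
  rw [← abs_of_nonneg (sub_nonneg.2 hst)]
  exact (covariance_increment_bound_general hg hs (hs.trans hst)).trans (by gcongr)
end

section
/- Let a, b ≥ 0 and define g : [0,∞) × [0,∞) → ℝ by g(s,t) = a(√(s+t) − √|t−s|) + b(√s + √t − √(s+t)). Fix h > 0 and define D(t) = g(t+h, t+h) + g(t,t) − 2g(t, t+h) for t ≥ 0. Then: if b > a, the function D is strictly decreasing on [0,∞); if a > b, D is strictly increasing on [0,∞); and if a = b, D is constant (equal to 2a√h). -/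
/-!
For any function `φ` in place of `√`, the increment variance is
`D t = 2 a (φ h - φ 0) + (a - b) Δ_h² φ (2 t)`, where `Δ_h² φ x = φ (x + 2h) - 2 φ (x + h) + φ x`.
If `φ'` is strictly convex, then the derivative `Δ_h² φ'` of `Δ_h² φ` is positive, hence `Δ_h² φ`
is strictly increasing and the sign of `a - b` decides the monotonicity of `D`. For `φ = √` the
derivative `1 / (2 √x)` is strictly convex, as the reciprocal of a positive strictly concave
function.
-/

open Set
open scoped fwdDiff

section ForwardDifference

variable {f f' : ℝ → ℝ} {s : Set ℝ} {c h x : ℝ}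

lemma fwdDiff_fwdDiff_apply (f : ℝ → ℝ) (h x : ℝ) :
    Δ_[h] (Δ_[h] f) x = f (x + 2 * h) - 2 * f (x + h) + f x := by
  simp only [fwdDiff, add_assoc, ← two_mul]
  ring

lemma fwdDiff_fwdDiff_pos_of_strictConvexOn (hf : StrictConvexOn ℝ s f) (hh : h ≠ 0)
    (hx : x ∈ s) (hx2h : x + 2 * h ∈ s) : 0 < Δ_[h] (Δ_[h] f) x := by
  have hne : x ≠ x + 2 * h := by simpa using hh
  have hmid : (1 / 2 : ℝ) • x + (1 / 2 : ℝ) • (x + 2 * h) = x + h := by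
    simp only [smul_eq_mul]
    ring
  have hlt := hf.2 hx hx2h hne one_half_pos one_half_pos (add_halves 1)
  rw [hmid, smul_eq_mul, smul_eq_mul] at hlt
  rw [fwdDiff_fwdDiff_apply]
  linarith

lemma continuousOn_Ici_fwdDiff (hf : ContinuousOn f (Ici c)) (hh : 0 ≤ h) :
    ContinuousOn (Δ_[h] f) (Ici c) :=
  (hf.comp (by fun_prop) fun _ hy ↦ le_add_of_le_of_nonneg hy hh).sub hf

lemma hasDerivAt_fwdDiff {𝕜 F : Type*} [NontriviallyNormedField 𝕜] [NormedAddCommGroup F]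
    [NormedSpace 𝕜 F] {f f' : 𝕜 → F} {h x : 𝕜} (hx : HasDerivAt f (f' x) x)
    (hxh : HasDerivAt f (f' (x + h)) (x + h)) :
    HasDerivAt (Δ_[h] f) (Δ_[h] f' x) x :=
  (hxh.comp_add_const x h).sub hx

lemma strictMonoOn_Ici_fwdDiff_fwdDiff (hh : 0 < h) (hf : ContinuousOn f (Ici c))
    (hf' : ∀ x ∈ Ioi c, HasDerivAt f (f' x) x) (hconv : StrictConvexOn ℝ (Ioi c) f') :
    StrictMonoOn (Δ_[h] (Δ_[h] f)) (Ici c) := by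
  have shift_mem {y : ℝ} (hy : y ∈ Ioi c) : y + h ∈ Ioi c := lt_add_of_lt_of_pos hy hh
  have hderiv : ∀ x ∈ Ioi c, HasDerivAt (Δ_[h] f) (Δ_[h] f' x) x := fun x hx ↦
    hasDerivAt_fwdDiff (hf' x hx) (hf' _ (shift_mem hx))
  refine strictMonoOn_of_hasDerivWithinAt_pos (f' := Δ_[h] (Δ_[h] f')) (convex_Ici c)
    (continuousOn_Ici_fwdDiff (continuousOn_Ici_fwdDiff hf hh.le) hh.le) ?_ ?_ <;>
    rw [interior_Ici] <;> intro x hx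
  · exact (hasDerivAt_fwdDiff (hderiv x hx) (hderiv _ (shift_mem hx))).hasDerivWithinAt
  · refine fwdDiff_fwdDiff_pos_of_strictConvexOn hconv hh.ne' hx ?_
    simpa only [two_mul, add_assoc] using shift_mem (shift_mem hx)

end ForwardDifference

section SquareRoot

lemma strictConvexOn_inv_of_strictConcaveOn {𝕜 E : Type*} [Field 𝕜] [LinearOrder 𝕜]
    [IsStrictOrderedRing 𝕜] [AddCommGroup E] [Module 𝕜 E] {s : Set E} {f : E → 𝕜}
    (hf : StrictConcaveOn 𝕜 s f) (hpos : ∀ x ∈ s, 0 < f x) :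
    StrictConvexOn 𝕜 s fun x ↦ (f x)⁻¹ := by
  refine ⟨hf.1, fun x hx y hy hxy p q hp hq hpq ↦ ?_⟩
  have hinv : ConvexOn 𝕜 (Ioi 0) fun r : 𝕜 ↦ r⁻¹ := by
    simpa only [zpow_neg_one] using convexOn_zpow (𝕜 := 𝕜) (-1)
  have hmix : 0 < p • f x + q • f y :=
    hinv.1 (hpos x hx) (hpos y hy) hp.le hq.le hpq
  calc (f (p • x + q • y))⁻¹ < (p • f x + q • f y)⁻¹ :=
        inv_strictAnti₀ hmix (hf.2 hx hy hxy hp hq hpq)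
    _ ≤ p • (f x)⁻¹ + q • (f y)⁻¹ := hinv.2 (hpos x hx) (hpos y hy) hp.le hq.le hpq

lemma strictConvexOn_one_div_two_mul_sqrt :
    StrictConvexOn ℝ (Ioi 0) fun x : ℝ ↦ 1 / (2 * √x) := by
  have hconc : StrictConcaveOn ℝ (Ioi 0) fun x : ℝ ↦ √x + √x :=
    have hsqrt := Real.strictConcaveOn_sqrt.subset Ioi_subset_Ici_self (convex_Ioi 0)
    hsqrt.add hsqrt
  simpa only [one_div, two_mul] using strictConvexOn_inv_of_strictConcaveOn hconc
    fun x hx ↦ add_pos (Real.sqrt_pos.2 hx) (Real.sqrt_pos.2 hx)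

end SquareRoot

section IncrementVariance

variable {φ φ' : ℝ → ℝ} {a b h : ℝ} {g : ℝ → ℝ → ℝ} {D : ℝ → ℝ}

lemma increment_variance_eq_fwdDiff (hh : 0 ≤ h)
    (hg : ∀ s t, 0 ≤ s → 0 ≤ t →
      g s t = a * (φ (s + t) - φ |t - s|) + b * (φ s + φ t - φ (s + t)))
    (hD : ∀ t, 0 ≤ t → D t = g (t + h) (t + h) + g t t - 2 * g t (t + h))
    {t : ℝ} (ht : 0 ≤ t) :
    D t = 2 * a * (φ h - φ 0) + (a - b) * Δ_[h] (Δ_[h] φ) (2 * t) := by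
  have hth : 0 ≤ t + h := add_nonneg ht hh
  have sum_self : t + h + (t + h) = 2 * t + 2 * h := by ring
  have sum_cross : t + (t + h) = 2 * t + h := by ring
  rw [hD t ht, hg _ _ hth hth, hg _ _ ht ht, hg _ _ ht hth, fwdDiff_fwdDiff_apply, sum_self,
    sum_cross, ← two_mul t, sub_self, sub_self, abs_zero, add_sub_cancel_left, abs_of_nonneg hh]
  ring

theorem increment_variance_monotonicity_general (hh : 0 < h)
    (hφ : ContinuousOn φ (Ici 0)) (hφ' : ∀ x ∈ Ioi 0, HasDerivAt φ (φ' x) x)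
    (hconv : StrictConvexOn ℝ (Ioi 0) φ')
    (hg : ∀ s t, 0 ≤ s → 0 ≤ t →
      g s t = a * (φ (s + t) - φ |t - s|) + b * (φ s + φ t - φ (s + t)))
    (hD : ∀ t, 0 ≤ t → D t = g (t + h) (t + h) + g t t - 2 * g t (t + h)) :
    (a < b → StrictAntiOn D (Ici 0)) ∧
    (b < a → StrictMonoOn D (Ici 0)) ∧
    (a = b → ∀ t ∈ Ici (0 : ℝ), D t = 2 * a * (φ h - φ 0)) := by
  have hD_eq {t : ℝ} (ht : t ∈ Ici 0) :
      D t = 2 * a * (φ h - φ 0) + (a - b) * Δ_[h] (Δ_[h] φ) (2 * t) :=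
    increment_variance_eq_fwdDiff hh.le hg hD ht
  have hmono : StrictMonoOn (fun t ↦ Δ_[h] (Δ_[h] φ) (2 * t)) (Ici 0) :=
    (strictMonoOn_Ici_fwdDiff_fwdDiff hh hφ hφ' hconv).comp
      ((strictMono_mul_left_of_pos two_pos).strictMonoOn _)
      fun _ ht ↦ mul_nonneg zero_le_two (mem_Ici.1 ht)
  refine ⟨fun hab x hx y hy hxy ↦ ?_, fun hba x hx y hy hxy ↦ ?_, fun hab t ht ↦ ?_⟩
  · rw [hD_eq hx, hD_eq hy]
    exact add_lt_add_right (mul_lt_mul_of_neg_left (hmono hx hy hxy) (sub_neg.2 hab)) _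
  · rw [hD_eq hx, hD_eq hy]
    exact add_lt_add_right (mul_lt_mul_of_pos_left (hmono hx hy hxy) (sub_pos.2 hba)) _
  · rw [hD_eq ht, hab, sub_self, zero_mul, add_zero]

end IncrementVariance

/-- Monotonicity of the increment variance of the limiting process `Z`: with
`g(s,t) = a(√(s+t) − √|t−s|) + b(√s + √t − √(s+t))` for `a, b ≥ 0`, `h > 0`, and
`D(t) = g(t+h,t+h) + g(t,t) − 2g(t,t+h)`, the function `D` is strictly
decreasing on `[0,∞)` if `b > a`, strictly increasing on `[0,∞)` if `a > b`,
and constant equal to `2a√h` if `a = b`. -/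
theorem increment_variance_monotonicity (a b : ℝ) (ha : 0 ≤ a) (hb : 0 ≤ b)
    (h : ℝ) (hh : 0 < h)
    (g : ℝ → ℝ → ℝ)
    (hg : ∀ s t, 0 ≤ s → 0 ≤ t →
      g s t = a * (Real.sqrt (s + t) - Real.sqrt |t - s|)
        + b * (Real.sqrt s + Real.sqrt t - Real.sqrt (s + t)))
    (D : ℝ → ℝ)
    (hD : ∀ t, 0 ≤ t → D t = g (t + h) (t + h) + g t t - 2 * g t (t + h)) :
    (a < b → StrictAntiOn D (Set.Ici 0)) ∧
    (b < a → StrictMonoOn D (Set.Ici 0)) ∧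
    (a = b → ∀ t ∈ Set.Ici (0 : ℝ), D t = 2 * a * Real.sqrt h) := by
  simpa only [Real.sqrt_zero, sub_zero] using increment_variance_monotonicity_general hh
    Real.continuous_sqrt.continuousOn (fun _ hx ↦ Real.hasDerivAt_sqrt (ne_of_gt hx))
    strictConvexOn_one_div_two_mul_sqrt hg hD
end

section
/- Let u₀ : ℝ → ℝ be nondecreasing and Lipschitz continuous and let t > 0. For x ∈ ℝ define Φ_x(y) = u₀(y) + (x − y)²/(4t) and I(x,t) = { y ≤ x : Φ_x(y) = inf_{y' ≤ x} Φ_x(y') }. Then the set of shock points { x ∈ ℝ : I(x,t) contains at least two points } is countable. -/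
/-!
The minimizers of `Φ_x` move monotonically with `x`: if `x < x'`, every minimizer at `x` lies weakly
to the left of every minimizer at `x'`. Otherwise `z < y` with `y` minimizing at `x` and `z` at
`x'`; exchanging the two and adding the resulting inequalities cancels `u₀` and contradicts strict
convexity of the cost. The open intervals spanned by pairs of minimizers at distinct shocks are
therefore disjoint, and a separable space contains only countably many disjoint nonempty open sets.
-/

open Set

theorem countable_setOf_nontrivial_of_forall_lt_forall_le {α β : Type*} [LinearOrder α]
    [LinearOrder β] [DenselyOrdered β] [TopologicalSpace β] [OrderClosedTopology β]
    [TopologicalSpace.SeparableSpace β] {I : α → Set β}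
    (hI : ∀ ⦃x x'⦄, x < x' → ∀ y ∈ I x, ∀ z ∈ I x', y ≤ z) :
    {x | (I x).Nontrivial}.Countable := by
  have exists_lt (x : {x | (I x).Nontrivial}) : ∃ a ∈ I x, ∃ b ∈ I x, a < b := x.2.exists_lt
  choose a ha b hb hab using exists_lt
  have disjoint_of_lt {x x' : {x | (I x).Nontrivial}} (hx : x < x') :
      Disjoint (Ioo (a x) (b x)) (Ioo (a x') (b x')) :=
    disjoint_left.2 fun _ hw hw' ↦
      (hw.2.trans_le (hI hx _ (hb x) _ (ha x'))).not_gt hw'.1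
  have pairwise_disjoint : Pairwise (Function.onFun Disjoint fun x ↦ Ioo (a x) (b x)) :=
    fun _ _ hne ↦ hne.lt_or_gt.elim disjoint_of_lt fun hx ↦ (disjoint_of_lt hx).symm
  exact countable_coe_iff.1 <| pairwise_disjoint.countable_of_isOpen_disjoint
    (fun _ ↦ isOpen_Ioo) fun x ↦ nonempty_Ioo.2 (hab x)

section StrictConvex

variable {𝕜 : Type*} [Field 𝕜] [LinearOrder 𝕜] [IsStrictOrderedRing 𝕜] {L : 𝕜 → 𝕜}

theorem add_lt_add_of_strictConvexOn {s : Set 𝕜} (hL : StrictConvexOn 𝕜 s L) {a b c d : 𝕜}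
    (ha : a ∈ s) (hd : d ∈ s) (hab : a < b) (hac : a < c) (hsum : b + c = a + d) :
    L b + L c < L a + L d := by
  have had : a < d := by linarith
  obtain ⟨p, q, hp, hq, hpq, hb⟩ : b ∈ openSegment 𝕜 a d := by
    rw [openSegment_eq_Ioo had]
    exact ⟨hab, by linarith⟩
  have hc : q • a + p • d = c := by
    simp only [smul_eq_mul] at hb ⊢
    linear_combination (a + d) * hpq - hb - hsum
  have hLb := hL.2 ha hd had.ne hp hq hpq
  have hLc := hL.2 ha hd had.ne hq hp (by rwa [add_comm])
  rw [hb] at hLb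
  rw [hc] at hLc
  simp only [smul_eq_mul] at hLb hLc
  calc L b + L c < (p * L a + q * L d) + (q * L a + p * L d) := add_lt_add hLb hLc
    _ = L a + L d := by linear_combination (L a + L d) * hpq

theorem strictConvexOn_div_const {E : Type*} [AddCommMonoid E] [Module 𝕜 E] {s : Set E} {f : E → 𝕜}
    (hf : StrictConvexOn 𝕜 s f) {c : 𝕜} (hc : 0 < c) : StrictConvexOn 𝕜 s fun x ↦ f x / c := by
  refine ⟨hf.1, fun x hx y hy hxy a b ha hb hab ↦ ?_⟩
  calc f (a • x + b • y) / c < (a • f x + b • f y) / c := by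
        gcongr
        exact hf.2 hx hy hxy ha hb hab
    _ = a • (f x / c) + b • (f y / c) := by simp only [smul_eq_mul]; ring

/-- The set `I(x)` of minimizers over `y ≤ x` of the Hopf–Lax functional `y ↦ u₀ y + L (x - y)`,
with initial data `u₀` and cost `L`. The time is absorbed into the cost, which is
`L v = v ^ 2 / (4 * t)` for the equation `u_t + (u_x)² = 0`. -/
def hopfLaxMinimizers (u₀ L : 𝕜 → 𝕜) (x : 𝕜) : Set 𝕜 :=
  {y | y ≤ x ∧ ∀ y' ≤ x, u₀ y + L (x - y) ≤ u₀ y' + L (x - y')}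

theorem le_of_mem_hopfLaxMinimizers_of_lt {u₀ : 𝕜 → 𝕜} (hL : StrictConvexOn 𝕜 (Ici 0) L)
    {x x' y z : 𝕜} (hx : x < x') (hy : y ∈ hopfLaxMinimizers u₀ L x)
    (hz : z ∈ hopfLaxMinimizers u₀ L x') : y ≤ z := by
  obtain ⟨hyx, hy_min⟩ := hy
  obtain ⟨-, hz_min⟩ := hz
  by_contra! hzy
  have exchange_at_x : u₀ y + L (x - y) ≤ u₀ z + L (x - z) := hy_min z (hzy.le.trans hyx)
  have exchange_at_x' : u₀ z + L (x' - z) ≤ u₀ y + L (x' - y) := hz_min y (hyx.trans hx.le)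
  have strict_convexity : L (x - z) + L (x' - y) < L (x - y) + L (x' - z) :=
    add_lt_add_of_strictConvexOn hL (sub_nonneg.2 hyx) (sub_nonneg.2 (by linarith))
      (by linarith) (by linarith) (by ring)
  linarith

end StrictConvex

theorem shocks_countable_general (u₀ : ℝ → ℝ) {L : ℝ → ℝ} (hL : StrictConvexOn ℝ (Ici 0) L) :
    {x | (hopfLaxMinimizers u₀ L x).Nontrivial}.Countable :=
  countable_setOf_nontrivial_of_forall_lt_forall_le fun _ _ hx _ hy _ hz ↦
    le_of_mem_hopfLaxMinimizers_of_lt hL hx hy hz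

/-- Countability of shocks: for `u₀` nondecreasing and Lipschitz and `t > 0`,
the set of points `x` such that the minimizing set `I(x,t)` of the Hopf–Lax
functional `Φ_x(y) = u₀(y) + (x−y)²/(4t)` over `(−∞, x]` contains at least two
points is countable. -/
theorem shocks_countable (u₀ : ℝ → ℝ) (hmono : Monotone u₀)
    (K : NNReal) (hLip : LipschitzWith K u₀)
    (t : ℝ) (ht : 0 < t) :
    Set.Countable {x : ℝ |
      ∃ y₁ y₂ : ℝ, y₁ ≠ y₂ ∧
        (y₁ ≤ x ∧ ∀ y' ≤ x,
          u₀ y₁ + (x - y₁) ^ 2 / (4 * t) ≤ u₀ y' + (x - y') ^ 2 / (4 * t)) ∧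
        (y₂ ≤ x ∧ ∀ y' ≤ x,
          u₀ y₂ + (x - y₂) ^ 2 / (4 * t) ≤ u₀ y' + (x - y') ^ 2 / (4 * t))} := by
  have hL := strictConvexOn_div_const (strictConvexOn_pow le_rfl) (by positivity : 0 < 4 * t)
  refine (shocks_countable_general u₀ hL).mono ?_
  rintro x ⟨y₁, y₂, hne, hy₁, hy₂⟩
  exact ⟨y₁, hy₁, y₂, hy₂, hne⟩
end
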